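/- Let p, q be continuous and positive on (0,1], p ∈ C[0,1] ∩ C¹(0,1] with 1/p ∈ L¹(0,1], and suppose y ∈ C[0,1] ∩ C²(0,1] solves −(p(x)y′(x))′ = q(x) f(x, y(x)) on (0,1) with boundary conditions y(0) = δ₁ and α₁ y(1) + β₁ y′(1) = γ₁, where μ = α₁h(1) + β₁/p(1) ≠ 0 and h(x) = ∫₀ˣ dt/p(t). Assume moreover that ∫₀¹ (1/p(x)) ∫ₓ¹ q(s) ds dx < ∞ and f is continuous and bounded along the solution. Then y satisfies the Fredholm integral equation y(x) = g(x) + ∫₀¹ G(x,s) q(s) f(s, y(s)) ds, where g(x) = δ₁ + ((γ₁ − δ₁α₁)/μ) h(x) and G(x,s) = h(min(x,s))[1 − α₁ h(max(x,s))/μ]. -/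

import Mathlib

open MeasureTheory

open Set Filter Topology intervalIntegral

section TailIntegral

variable {F w q : ℝ → ℝ}

theorem intervalIntegrable_of_continuousOn_Ioc_zero_one (hF : ContinuousOn F (Ioc 0 1))
    {a b : ℝ} (ha : a ∈ Ioc (0 : ℝ) 1) (hb : b ∈ Ioc (0 : ℝ) 1) :
    IntervalIntegrable F volume a b :=
  (hF.mono (ordConnected_Ioc.uIcc_subset ha hb)).intervalIntegrable

theorem hasDerivAt_tail_integral (hF : ContinuousOn F (Ioc 0 1)) {x : ℝ}
    (hx : x ∈ Ioo (0 : ℝ) 1) : HasDerivAt (fun u => ∫ s in u..1, F s) (-F x) x :=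
  integral_hasDerivAt_left
    (intervalIntegrable_of_continuousOn_Ioc_zero_one hF (Ioo_subset_Ioc_self hx) (by simp))
    ((hF.mono Ioo_subset_Ioc_self).stronglyMeasurableAtFilter isOpen_Ioo x hx)
    ((hF.mono Ioo_subset_Ioc_self).continuousAt (isOpen_Ioo.mem_nhds hx))

theorem continuousOn_tail_integral (hF : ContinuousOn F (Ioc 0 1)) :
    ContinuousOn (fun u => ∫ s in u..1, F s) (Ioc 0 1) := by
  intro x hx
  have hx2 : x / 2 ∈ Ioc (0 : ℝ) 1 := ⟨by linarith [hx.1], by linarith [hx.1, hx.2]⟩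
  have hi : IntervalIntegrable F volume 1 (x / 2) :=
    intervalIntegrable_of_continuousOn_Ioc_zero_one hF (by simp) hx2
  have hc := (continuousOn_primitive_interval' hi left_mem_uIcc).neg
  rw [uIcc_of_ge hx2.2] at hc
  have hcx := hc x ⟨by linarith [hx.1], hx.2⟩
  have : ContinuousWithinAt (fun u => ∫ s in u..1, F s) (Icc (x / 2) 1) x := by
    refine hcx.congr (fun u _ => ?_) ?_ <;> exact integral_symm _ _
  refine this.mono_of_mem_nhdsWithin ?_
  filter_upwards [self_mem_nhdsWithin, mem_nhdsWithin_of_mem_nhds (lt_mem_nhds (half_lt_self hx.1))]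
    with u hu hu'
  exact ⟨hu'.le, hu.2⟩

theorem continuousOn_integral_zero (hw : IntervalIntegrable w volume 0 1) :
    ContinuousOn (fun x => ∫ t in (0 : ℝ)..x, w t) (Icc 0 1) := by
  simpa using continuousOn_primitive_interval' hw left_mem_uIcc

theorem hasDerivAt_integral_zero (hwc : ContinuousOn w (Ioc 0 1))
    (hw : IntervalIntegrable w volume 0 1) {x : ℝ} (hx : x ∈ Ioo (0 : ℝ) 1) :
    HasDerivAt (fun u => ∫ t in (0 : ℝ)..u, w t) (w x) x :=
  integral_hasDerivAt_right
    (hw.mono_set (by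
      rw [uIcc_of_le hx.1.le, uIcc_of_le zero_le_one]; exact Icc_subset_Icc_right hx.2.le))
    ((hwc.mono Ioo_subset_Ioc_self).stronglyMeasurableAtFilter isOpen_Ioo x hx)
    ((hwc.mono Ioo_subset_Ioc_self).continuousAt (isOpen_Ioo.mem_nhds hx))

theorem integral_zero_nonneg (hw0 : ∀ x ∈ Ioc (0 : ℝ) 1, 0 ≤ w x) {x : ℝ}
    (hx : x ∈ Icc (0 : ℝ) 1) : 0 ≤ ∫ t in (0 : ℝ)..x, w t := by
  rw [integral_of_le hx.1]
  exact setIntegral_nonneg measurableSet_Ioc fun t ht => hw0 t ⟨ht.1, ht.2.trans hx.2⟩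

theorem continuousOn_Icc_of_abs_le {g B : ℝ → ℝ} (hg : ContinuousOn g (Ioc 0 1))
    (hgB : ∀ x ∈ Ioc (0 : ℝ) 1, |g x| ≤ B x) (hB : ContinuousOn B (Icc 0 1))
    (hg0 : g 0 = 0) (hB0 : B 0 = 0) : ContinuousOn g (Icc 0 1) := by
  intro x hx
  rcases hx.1.eq_or_lt with rfl | hx0
  · have hB' := hB 0 hx
    rw [ContinuousWithinAt, hB0] at hB'
    rw [ContinuousWithinAt, hg0]
    refine squeeze_zero_norm' ?_ hB'
    filter_upwards [self_mem_nhdsWithin] with u hu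
    rcases hu.1.eq_or_lt with rfl | hu0
    · simp [hg0, hB0]
    · exact hgB u ⟨hu0, hu.2⟩
  · refine (hg x ⟨hx0, hx.2⟩).mono_of_mem_nhdsWithin ?_
    filter_upwards [self_mem_nhdsWithin, mem_nhdsWithin_of_mem_nhds (lt_mem_nhds hx0)]
      with u hu hu'
    exact ⟨hu', hu.2⟩

theorem integral_mul_tail_integral_le (hw0 : ∀ x ∈ Ioc (0 : ℝ) 1, 0 ≤ w x)
    (hw : IntervalIntegrable w volume 0 1)
    (hq0 : ∀ x ∈ Ioc (0 : ℝ) 1, 0 ≤ q x) (hqc : ContinuousOn q (Ioc 0 1))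
    (hd : IntervalIntegrable (fun x => w x * ∫ s in x..1, q s) volume 0 1)
    {x : ℝ} (hx : x ∈ Ioc (0 : ℝ) 1) :
    (∫ t in (0 : ℝ)..x, w t) * ∫ s in x..1, q s ≤
      ∫ t in (0 : ℝ)..x, w t * ∫ s in t..1, q s := by
  have hsub : uIcc 0 x ⊆ uIcc (0 : ℝ) 1 := by
    rw [uIcc_of_le hx.1.le, uIcc_of_le zero_le_one]; exact Icc_subset_Icc_right hx.2
  rw [← intervalIntegral.integral_mul_const]
  refine integral_mono_on_of_le_Ioo hx.1.le ((hw.mono_set hsub).mul_const _)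
    (hd.mono_set hsub) fun t ht => ?_
  have ht' : t ∈ Ioc (0 : ℝ) 1 := ⟨ht.1, ht.2.le.trans hx.2⟩
  refine mul_le_mul_of_nonneg_left ?_ (hw0 t ht')
  rw [← integral_add_adjacent_intervals
    (intervalIntegrable_of_continuousOn_Ioc_zero_one hqc ht' hx)
    (intervalIntegrable_of_continuousOn_Ioc_zero_one hqc hx (by simp))]
  exact le_add_of_nonneg_left (integral_nonneg ht.2.le
    fun s hs => hq0 s ⟨ht.1.trans_le hs.1, hs.2.trans hx.2⟩)

theorem abs_tail_integral_le {C : ℝ} (hqc : ContinuousOn q (Ioc 0 1))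
    (hFq : ∀ x ∈ Ioc (0 : ℝ) 1, |F x| ≤ C * q x) {x : ℝ} (hx : x ∈ Ioc (0 : ℝ) 1) :
    |∫ s in x..1, F s| ≤ C * ∫ s in x..1, q s := by
  rw [← intervalIntegral.integral_const_mul, ← Real.norm_eq_abs]
  exact intervalIntegral.norm_integral_le_of_norm_le hx.2
    (ae_of_all _ fun t ht => hFq t ⟨hx.1.trans ht.1, ht.2⟩)
    ((intervalIntegrable_of_continuousOn_Ioc_zero_one hqc hx (by simp)).const_mul C)

theorem continuousOn_integral_mul_tail_integral {C : ℝ} (hC : 0 ≤ C)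
    (hw0 : ∀ x ∈ Ioc (0 : ℝ) 1, 0 ≤ w x) (hw : IntervalIntegrable w volume 0 1)
    (hq0 : ∀ x ∈ Ioc (0 : ℝ) 1, 0 ≤ q x) (hqc : ContinuousOn q (Ioc 0 1))
    (hd : IntervalIntegrable (fun x => w x * ∫ s in x..1, q s) volume 0 1)
    (hF : ContinuousOn F (Ioc 0 1)) (hFq : ∀ x ∈ Ioc (0 : ℝ) 1, |F x| ≤ C * q x) :
    ContinuousOn (fun x => (∫ t in (0 : ℝ)..x, w t) * ∫ s in x..1, F s) (Icc 0 1) := by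
  refine continuousOn_Icc_of_abs_le
    (B := fun x => C * ∫ t in (0 : ℝ)..x, w t * ∫ s in t..1, q s)
    (((continuousOn_integral_zero hw).mono Ioc_subset_Icc_self).mul
      (continuousOn_tail_integral hF)) (fun x hx => ?_)
    (continuousOn_const.mul (continuousOn_integral_zero hd)) (by simp) (by simp)
  have hx' := Ioc_subset_Icc_self hx
  rw [abs_mul, abs_of_nonneg (integral_zero_nonneg hw0 hx')]
  calc _ ≤ (∫ t in (0 : ℝ)..x, w t) * (C * ∫ s in x..1, q s) :=
        mul_le_mul_of_nonneg_left (abs_tail_integral_le hqc hFq hx) (integral_zero_nonneg hw0 hx')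
    _ = C * ((∫ t in (0 : ℝ)..x, w t) * ∫ s in x..1, q s) := by ring
    _ ≤ _ := mul_le_mul_of_nonneg_left
        (integral_mul_tail_integral_le hw0 hw hq0 hqc hd hx) hC

theorem intervalIntegrable_integral_mul_of_nonneg (hwc : ContinuousOn w (Ioc 0 1))
    (hw0 : ∀ x ∈ Ioc (0 : ℝ) 1, 0 ≤ w x) (hw : IntervalIntegrable w volume 0 1)
    (hq0 : ∀ x ∈ Ioc (0 : ℝ) 1, 0 ≤ q x) (hqc : ContinuousOn q (Ioc 0 1))
    (hd : IntervalIntegrable (fun x => w x * ∫ s in x..1, q s) volume 0 1) :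
    IntervalIntegrable (fun x => (∫ t in (0 : ℝ)..x, w t) * q x) volume 0 1 := by
  have hcont : ContinuousOn (fun x => (∫ t in (0 : ℝ)..x, w t * ∫ s in t..1, q s) -
      (∫ t in (0 : ℝ)..x, w t) * ∫ s in x..1, q s) (Icc 0 1) :=
    (continuousOn_integral_zero hd).sub (continuousOn_integral_mul_tail_integral zero_le_one
      hw0 hw hq0 hqc hd hqc fun x hx => by rw [abs_of_nonneg (hq0 x hx), one_mul])
  rw [intervalIntegrable_iff_integrableOn_Ioc_of_le zero_le_one]
  refine integrableOn_deriv_of_nonneg hcont (fun x hx => ?_) fun x hx =>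
    mul_nonneg (integral_zero_nonneg hw0 (Ioo_subset_Icc_self hx)) (hq0 x (Ioo_subset_Ioc_self hx))
  refine ((hasDerivAt_integral_zero (hwc.mul (continuousOn_tail_integral hqc)) hd hx).fun_sub
    ((hasDerivAt_integral_zero hwc hw hx).fun_mul (hasDerivAt_tail_integral hqc hx))).congr_deriv ?_
  simp only [Pi.mul_apply]
  ring

theorem intervalIntegrable_integral_mul {C : ℝ} (hwc : ContinuousOn w (Ioc 0 1))
    (hw0 : ∀ x ∈ Ioc (0 : ℝ) 1, 0 ≤ w x) (hw : IntervalIntegrable w volume 0 1)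
    (hq0 : ∀ x ∈ Ioc (0 : ℝ) 1, 0 ≤ q x) (hqc : ContinuousOn q (Ioc 0 1))
    (hd : IntervalIntegrable (fun x => w x * ∫ s in x..1, q s) volume 0 1)
    (hF : ContinuousOn F (Ioc 0 1)) (hFq : ∀ x ∈ Ioc (0 : ℝ) 1, |F x| ≤ C * q x) :
    IntervalIntegrable (fun x => (∫ t in (0 : ℝ)..x, w t) * F x) volume 0 1 := by
  refine ((intervalIntegrable_integral_mul_of_nonneg hwc hw0 hw hq0 hqc hd).const_mul C).mono_fun'
    ?_ ?_
  · rw [uIoc_of_le zero_le_one]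
    exact (((continuousOn_integral_zero hw).mono Ioc_subset_Icc_self).mul hF).aestronglyMeasurable
      measurableSet_Ioc
  · rw [uIoc_of_le zero_le_one]
    filter_upwards [ae_restrict_mem measurableSet_Ioc] with x hx
    have h0 := integral_zero_nonneg hw0 (Ioc_subset_Icc_self hx)
    rw [norm_mul, Real.norm_of_nonneg h0, mul_left_comm]
    exact mul_le_mul_of_nonneg_left (hFq x hx) h0

end TailIntegral

/-- The flux `p * y'` of a solution of `-(p y')' = F` is, up to the endpoint `1`, the tail
integral of `F` plus its value at `1`. -/
theorem flux_eq_add_tail_integral {p y F : ℝ → ℝ} (hpc : ContinuousOn p (Ioc 0 1))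
    (hpp : ∀ x ∈ Ioc (0 : ℝ) 1, 0 < p x) (hF : ContinuousOn F (Ioc 0 1))
    (hyd : ∀ x ∈ Ioc (0 : ℝ) 1, DifferentiableAt ℝ y x)
    (hode : ∀ x ∈ Ioo (0 : ℝ) 1, HasDerivAt (fun t => p t * deriv y t) (-F x) x) :
    ∀ x ∈ Ioo (0 : ℝ) 1, p x * deriv y x = p 1 * deriv y 1 + ∫ s in x..1, F s := by
  have hD : ∀ x ∈ Ioo (0 : ℝ) 1,
      HasDerivAt (fun t => p t * deriv y t - ∫ s in t..1, F s) 0 x := fun x hx => by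
    simpa using (hode x hx).fun_sub (hasDerivAt_tail_integral hF hx)
  obtain ⟨c, hc⟩ := isOpen_Ioo.exists_is_const_of_deriv_eq_zero isPreconnected_Ioo
    (fun x hx => (hD x hx).differentiableAt.differentiableWithinAt) fun x hx => (hD x hx).deriv
  have h1 : (1 : ℝ) ∈ Ioc (0 : ℝ) 1 := by simp
  have hlim : Tendsto (fun x => deriv y x) (𝓝[<] 1) (𝓝 (c / p 1)) := by
    have hq : ContinuousOn (fun x => (c + ∫ s in x..1, F s) / p x) (Ioc 0 1) :=
      (continuousOn_const.add (continuousOn_tail_integral hF)).div hpc fun x hx => (hpp x hx).ne'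
    have ht := (hq 1 h1).mono_left (nhdsWithin_mono 1 Ioo_subset_Ioc_self)
    rw [nhdsWithin_Ioo_eq_nhdsLT zero_lt_one] at ht
    simp only [integral_same, add_zero] at ht
    refine ht.congr' ?_
    filter_upwards [Ioo_mem_nhdsLT zero_lt_one] with x hx
    rw [div_eq_iff (hpp x (Ioo_subset_Ioc_self hx)).ne']
    linarith [hc x hx]
  have hder := hasDerivWithinAt_Iic_of_tendsto_deriv (s := Ioo 0 1)
    (fun x hx => (hyd x (Ioo_subset_Ioc_self hx)).differentiableWithinAt)
    (hyd 1 h1).continuousAt.continuousWithinAt (Ioo_mem_nhdsLT zero_lt_one) hlim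
  have hc1 : deriv y 1 = c / p 1 :=
    (uniqueDiffOn_Iic (1 : ℝ) 1 self_mem_Iic).eq_deriv _ (hyd 1 h1).hasDerivAt.hasDerivWithinAt hder
  intro x hx
  rw [hc1, mul_div_cancel₀ _ (hpp 1 h1).ne']
  linarith [hc x hx]

/-- Integration against the Dirichlet-Robin Green function, split at the diagonal. -/
theorem integral_green_mul {h F : ℝ → ℝ} (α μ : ℝ) (hF : ContinuousOn F (Ioc 0 1))
    (hhF : IntervalIntegrable (fun s => h s * F s) volume 0 1) {x : ℝ} (hx : x ∈ Ioc (0 : ℝ) 1) :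
    ∫ s in (0 : ℝ)..1, (h (min x s) * (1 - α * h (max x s) / μ)) * F s =
      (∫ s in (0 : ℝ)..x, h s * F s) + h x * (∫ s in x..1, F s) -
        α * h x / μ * ∫ s in (0 : ℝ)..1, h s * F s := by
  have hhF0 : IntervalIntegrable (fun s => h s * F s) volume 0 x := hhF.mono_set (by
    rw [uIcc_of_le hx.1.le, uIcc_of_le zero_le_one]; exact Icc_subset_Icc_right hx.2)
  have hhF1 : IntervalIntegrable (fun s => h s * F s) volume x 1 := hhF.mono_set (by
    rw [uIcc_of_le hx.2, uIcc_of_le zero_le_one]; exact Icc_subset_Icc_left hx.1.le)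
  have hF1 : IntervalIntegrable F volume x 1 :=
    intervalIntegrable_of_continuousOn_Ioc_zero_one hF hx (by simp)
  have e0 : EqOn (fun s => (1 - α * h x / μ) * (h s * F s))
      (fun s => (h (min x s) * (1 - α * h (max x s) / μ)) * F s) (uIoc 0 x) := fun s hs => by
    rw [uIoc_of_le hx.1.le] at hs
    simp only [min_eq_right hs.2, max_eq_left hs.2]
    ring
  have e1 : EqOn (fun s => h x * F s - α * h x / μ * (h s * F s))
      (fun s => (h (min x s) * (1 - α * h (max x s) / μ)) * F s) (uIoc x 1) := fun s hs => by
    rw [uIoc_of_le hx.2] at hs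
    simp only [min_eq_left hs.1.le, max_eq_right hs.1.le]
    ring
  have i0 := hhF0.const_mul (1 - α * h x / μ)
  have i1 := (hF1.const_mul (h x)).sub (hhF1.const_mul (α * h x / μ))
  rw [← integral_add_adjacent_intervals (i0.congr e0) (i1.congr e1),
    ← integral_congr_ae (ae_of_all _ fun s hs => e0 hs),
    ← integral_congr_ae (ae_of_all _ fun s hs => e1 hs),
    intervalIntegral.integral_sub (hF1.const_mul (h x)) (hhF1.const_mul (α * h x / μ)),
    intervalIntegral.integral_const_mul, intervalIntegral.integral_const_mul,
    intervalIntegral.integral_const_mul, ← integral_add_adjacent_intervals hhF0 hhF1]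
  ring

/-- A solution of `-(p y')' = F` in terms of `y 0` and the flux at `1`. -/
theorem eq_add_flux_mul_add_integral {p q y F h : ℝ → ℝ} {C : ℝ} (hC : 0 ≤ C)
    (hpc : ContinuousOn p (Ioc 0 1)) (hpp : ∀ x ∈ Ioc (0 : ℝ) 1, 0 < p x)
    (hq0 : ∀ x ∈ Ioc (0 : ℝ) 1, 0 ≤ q x) (hqc : ContinuousOn q (Ioc 0 1))
    (hint : IntervalIntegrable (fun t => 1 / p t) volume 0 1)
    (hd : IntervalIntegrable (fun x => (1 / p x) * ∫ s in x..(1 : ℝ), q s) volume 0 1)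
    (hh : h = fun x => ∫ t in (0 : ℝ)..x, 1 / p t)
    (hF : ContinuousOn F (Ioc 0 1)) (hFq : ∀ x ∈ Ioc (0 : ℝ) 1, |F x| ≤ C * q x)
    (hyc : ContinuousOn y (Icc 0 1)) (hyd : ∀ x ∈ Ioc (0 : ℝ) 1, DifferentiableAt ℝ y x)
    (hode : ∀ x ∈ Ioo (0 : ℝ) 1, HasDerivAt (fun t => p t * deriv y t) (-F x) x)
    (hhF : IntervalIntegrable (fun s => h s * F s) volume 0 1) :
    ∀ x ∈ Icc (0 : ℝ) 1, y x = y 0 + p 1 * deriv y 1 * h x + h x * (∫ s in x..1, F s) +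
      ∫ s in (0 : ℝ)..x, h s * F s := by
  have hwc : ContinuousOn (fun t => 1 / p t) (Ioc 0 1) :=
    continuousOn_const.div hpc fun x hx => (hpp x hx).ne'
  have hw0 : ∀ x ∈ Ioc (0 : ℝ) 1, 0 ≤ 1 / p x := fun x hx => (one_div_pos.2 (hpp x hx)).le
  have hhc : ContinuousOn h (Icc 0 1) := hh ▸ continuousOn_integral_zero hint
  have hhV : ContinuousOn (fun x => h x * ∫ s in x..1, F s) (Icc 0 1) := by
    subst hh
    exact continuousOn_integral_mul_tail_integral hC hw0 hint hq0 hqc hd hF hFq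
  have hflux := flux_eq_add_tail_integral hpc hpp hF hyd hode
  intro x hx
  have key := integral_eq_sub_of_hasDerivAt_of_le (a := 0) (b := x)
    (f := fun t => y t - p 1 * deriv y 1 * h t - h t * ∫ s in t..1, F s)
    (f' := fun s => h s * F s) hx.1
    (((hyc.sub (continuousOn_const.mul hhc)).sub hhV).mono (Icc_subset_Icc_right hx.2))
    (fun t ht => ?_) (hhF.mono_set (by
      rw [uIcc_of_le hx.1, uIcc_of_le zero_le_one]; exact Icc_subset_Icc_right hx.2))
  · have h0 : h 0 = 0 := by simp [hh]
    simp only [h0] at key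
    linarith
  · have ht' : t ∈ Ioo (0 : ℝ) 1 := ⟨ht.1, ht.2.trans_le hx.2⟩
    have hht : HasDerivAt h (1 / p t) t := hh ▸ hasDerivAt_integral_zero hwc hint ht'
    have hp := (hpp t (Ioo_subset_Ioc_self ht')).ne'
    refine (((hyd t (Ioo_subset_Ioc_self ht')).hasDerivAt.fun_sub (hht.const_mul _)).fun_sub
      (hht.fun_mul (hasDerivAt_tail_integral hF ht'))).congr_deriv ?_
    rw [eq_div_of_mul_eq hp ((mul_comm _ _).trans (hflux t ht'))]
    ring

theorem solution_satisfies_fredholm_dirichlet_robin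
    (p q : ℝ → ℝ) (f : ℝ → ℝ → ℝ) (y : ℝ → ℝ)
    (δ₁ α₁ β₁ γ₁ μ : ℝ) (h : ℝ → ℝ)
    -- (C₁)
    (hpC : ContinuousOn p (Set.Icc 0 1))
    (hpd : ∀ x ∈ Set.Ioc (0:ℝ) 1, DifferentiableAt ℝ p x)
    (hpp : ∀ x ∈ Set.Ioc (0:ℝ) 1, 0 < p x)
    (hqp : ∀ x ∈ Set.Ioc (0:ℝ) 1, 0 < q x)
    (hqc : ContinuousOn q (Set.Ioc 0 1))
    -- (C₂)
    (hint : IntervalIntegrable (fun t => 1 / p t) volume 0 1)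
    (hdouble : IntervalIntegrable
      (fun x => (1 / p x) * ∫ s in x..(1:ℝ), q s) volume 0 1)
    -- h and μ
    (hh : ∀ x, h x = ∫ t in (0:ℝ)..x, 1 / p t)
    (hμ : μ = α₁ * h 1 + β₁ / p 1) (hμ0 : μ ≠ 0)
    -- f continuous and bounded along the solution
    (hfc : ContinuousOn (fun x => f x (y x)) (Set.Ioc 0 1))
    (hfb : ∃ C : ℝ, ∀ x ∈ Set.Ioc (0:ℝ) 1, |f x (y x)| ≤ C)
    -- y solves the singular BVP
    (hyc : ContinuousOn y (Set.Icc 0 1))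
    (hyd : ∀ x ∈ Set.Ioc (0:ℝ) 1, DifferentiableAt ℝ y x)
    (hode : ∀ x ∈ Set.Ioo (0:ℝ) 1,
      HasDerivAt (fun t => p t * deriv y t) (-(q x * f x (y x))) x)
    (hbc0 : y 0 = δ₁)
    (hbc1 : α₁ * y 1 + β₁ * deriv y 1 = γ₁) :
    ∀ x ∈ Set.Icc (0:ℝ) 1,
      y x = δ₁ + ((γ₁ - δ₁ * α₁) / μ) * h x +
        ∫ s in (0:ℝ)..1,
          (h (min x s) * (1 - α₁ * h (max x s) / μ)) * q s * f s (y s) := by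
  obtain ⟨C, hC⟩ := hfb
  have h1 : (1 : ℝ) ∈ Ioc (0 : ℝ) 1 := by simp
  have hC0 : 0 ≤ C := (abs_nonneg _).trans (hC 1 h1)
  have hpc : ContinuousOn p (Ioc 0 1) := hpC.mono Ioc_subset_Icc_self
  have hq0 : ∀ x ∈ Ioc (0 : ℝ) 1, 0 ≤ q x := fun x hx => (hqp x hx).le
  have hF : ContinuousOn (fun x => q x * f x (y x)) (Ioc 0 1) := hqc.mul hfc
  have hFq : ∀ x ∈ Ioc (0 : ℝ) 1, |q x * f x (y x)| ≤ C * q x := fun x hx => by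
    rw [abs_mul, abs_of_nonneg (hq0 x hx), mul_comm]
    exact mul_le_mul_of_nonneg_right (hC x hx) (hq0 x hx)
  have hh' : h = fun x => ∫ t in (0 : ℝ)..x, 1 / p t := funext hh
  have hhF : IntervalIntegrable (fun s => h s * (q s * f s (y s))) volume 0 1 := by
    rw [hh']
    exact intervalIntegrable_integral_mul
      (continuousOn_const.div hpc fun x hx => (hpp x hx).ne')
      (fun x hx => (one_div_pos.2 (hpp x hx)).le) hint hq0 hqc hdouble hF hFq
  have hrep := eq_add_flux_mul_add_integral hC0 hpc hpp hq0 hqc hint hdouble hh' hF hFq hyc hyd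
    hode hhF
  have h0 : h 0 = 0 := by simp [hh]
  intro x hx
  rcases hx.1.eq_or_lt with rfl | hx0
  · have : ∫ s in (0 : ℝ)..1, (h (min 0 s) * (1 - α₁ * h (max 0 s) / μ)) * q s * f s (y s) =
        ∫ s in (0 : ℝ)..1, 0 := by
      refine integral_congr fun s hs => ?_
      rw [uIcc_of_le zero_le_one] at hs
      simp [min_eq_left hs.1, h0]
    rw [this, hbc0, h0]
    simp
  · have hp1 := (hpp 1 h1).ne'
    have hy1 := hrep 1 ⟨zero_le_one, le_rfl⟩
    simp only [mul_assoc (_ * _) (q _)]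
    rw [integral_green_mul α₁ μ hF hhF ⟨hx0, hx.2⟩, hrep x hx, hbc0]
    rw [integral_same, hbc0] at hy1
    generalize (∫ s in (0 : ℝ)..1, h s * (q s * f s (y s))) = I at *
    have hflux : p 1 * deriv y 1 = (γ₁ - δ₁ * α₁ - α₁ * I) / μ := by
      rw [eq_div_iff hμ0, hμ, ← hbc1, hy1]
      field_simp
      ring
    rw [hflux]
    field_simp
    ring
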